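/- For any sequence D = (D_n)_{n=1}^∞ of nonempty open subsets of [0,1] forming a base for the topology of [0,1], the space X_D = (C[0,1], ‖·‖_D) fails to be octahedral: there exist ε > 0 and finitely many points x_1, …, x_n in the unit sphere of X_D such that no y in the unit sphere satisfies ‖x_i + y‖_D > 2 − ε for all i. -/

import Mathlib

open Set Filter Topology

/-- The `n`-th seminorm: `‖x‖ₙ = sup_{d ∈ Dₙ} |x d|`. -/
noncomputable def seminormD (D : ℕ → Set (Icc (0:ℝ) 1)) (n : ℕ)
    (x : C(Icc (0:ℝ) 1, ℝ)) : ℝ :=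
  ⨆ d : D n, |x d|

/-- The norm `‖x‖_D = (Σₙ 2⁻ⁿ ‖x‖ₙ²)^{1/2}` (indexing the sequence from `0`,
with weight `2^{-(n+1)}`). -/
noncomputable def normD (D : ℕ → Set (Icc (0:ℝ) 1)) (x : C(Icc (0:ℝ) 1, ℝ)) : ℝ :=
  Real.sqrt (∑' n : ℕ, (1 / 2 : ℝ) ^ (n + 1) * (seminormD D n x) ^ 2)

lemma sD_bdd (D : ℕ → Set (Icc (0:ℝ) 1)) (n : ℕ) (x : C(Icc (0:ℝ) 1, ℝ)) :
    BddAbove (Set.range fun d : D n => |x d|) :=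
  ⟨‖x‖, by rintro _ ⟨d, rfl⟩; exact x.norm_coe_le_norm d⟩

lemma sD_nonneg (D : ℕ → Set (Icc (0:ℝ) 1)) (n : ℕ) (x : C(Icc (0:ℝ) 1, ℝ)) :
    0 ≤ seminormD D n x := Real.iSup_nonneg fun _ => abs_nonneg _

lemma sD_le (D : ℕ → Set (Icc (0:ℝ) 1)) (n : ℕ) (x : C(Icc (0:ℝ) 1, ℝ)) :
    seminormD D n x ≤ ‖x‖ :=
  Real.iSup_le (fun d => x.norm_coe_le_norm d) (norm_nonneg _)

lemma sD_add (D : ℕ → Set (Icc (0:ℝ) 1)) (n : ℕ) (x y : C(Icc (0:ℝ) 1, ℝ)) :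
    seminormD D n (x + y) ≤ seminormD D n x + seminormD D n y := by
  refine Real.iSup_le (fun d => ?_) (add_nonneg (sD_nonneg D n x) (sD_nonneg D n y))
  have h1 := le_ciSup (sD_bdd D n x) d
  have h2 := le_ciSup (sD_bdd D n y) d
  have h3 := abs_add_le (x d) (y d)
  simp only [ContinuousMap.add_apply]
  unfold seminormD
  linarith

lemma sD_smul (D : ℕ → Set (Icc (0:ℝ) 1)) (n : ℕ) (c : ℝ) (x : C(Icc (0:ℝ) 1, ℝ)) :
    seminormD D n (c • x) = |c| * seminormD D n x := by
  unfold seminormD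
  rw [Real.mul_iSup_of_nonneg (abs_nonneg c)]
  simp [abs_mul]

lemma sD_summable (D : ℕ → Set (Icc (0:ℝ) 1)) (x : C(Icc (0:ℝ) 1, ℝ)) :
    Summable fun n : ℕ => (1 / 2 : ℝ) ^ (n + 1) * (seminormD D n x) ^ 2 := by
  refine Summable.of_nonneg_of_le (fun n => by positivity) (fun n => ?_)
    (((summable_nat_add_iff 1).2 summable_geometric_two).mul_right (‖x‖ ^ 2))
  have := sD_le D n x
  have := sD_nonneg D n x
  gcongr

lemma normD_sq (D : ℕ → Set (Icc (0:ℝ) 1)) (x : C(Icc (0:ℝ) 1, ℝ)) :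
    normD D x ^ 2 = ∑' n : ℕ, (1 / 2 : ℝ) ^ (n + 1) * (seminormD D n x) ^ 2 :=
  Real.sq_sqrt (tsum_nonneg fun n => by positivity)

lemma normD_smul (D : ℕ → Set (Icc (0:ℝ) 1)) (c : ℝ) (x : C(Icc (0:ℝ) 1, ℝ)) :
    normD D (c • x) = |c| * normD D x := by
  have h : normD D (c • x) ^ 2 = (|c| * normD D x) ^ 2 := by
    rw [mul_pow, normD_sq, normD_sq, ← tsum_mul_left]
    congr 1; ext n; rw [sD_smul]; ring
  exact (pow_left_inj₀ (Real.sqrt_nonneg _)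
    (mul_nonneg (abs_nonneg c) (Real.sqrt_nonneg _)) two_ne_zero).1 h

lemma normD_key (D : ℕ → Set (Icc (0:ℝ) 1)) (x y : C(Icc (0:ℝ) 1, ℝ)) (k : ℕ)
    (hx : normD D x = 1) (hy : normD D y = 1) :
    normD D (x + y) ^ 2 ≤ 4 - (1 / 2 : ℝ) ^ (k + 1) * (seminormD D k x - seminormD D k y) ^ 2 := by
  have h1 := normD_sq D x
  have h2 := normD_sq D y
  rw [hx] at h1; rw [hy] at h2
  have sx := sD_summable D x
  have sy := sD_summable D y
  have sxy := sD_summable D (x + y)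
  have hs := (((sx.mul_left 2).add (sy.mul_left 2)).sub sxy)
  have ht : ∀ n, (1 / 2 : ℝ) ^ (n + 1) * (seminormD D n x - seminormD D n y) ^ 2 ≤
      2 * ((1 / 2 : ℝ) ^ (n + 1) * seminormD D n x ^ 2) +
      2 * ((1 / 2 : ℝ) ^ (n + 1) * seminormD D n y ^ 2) -
      (1 / 2 : ℝ) ^ (n + 1) * seminormD D n (x + y) ^ 2 := by
    intro n
    have e : seminormD D n (x + y) ^ 2 ≤ (seminormD D n x + seminormD D n y) ^ 2 :=
      pow_le_pow_left₀ (sD_nonneg D n _) (sD_add D n x y) 2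
    have := mul_le_mul_of_nonneg_left e (show (0:ℝ) ≤ (1 / 2 : ℝ) ^ (n + 1) by positivity)
    nlinarith
  have h3 := hs.le_tsum k fun n _ => le_trans (by positivity) (ht n)
  rw [((sx.mul_left 2).add (sy.mul_left 2)).tsum_sub sxy,
    (sx.mul_left 2).tsum_add (sy.mul_left 2), tsum_mul_left, tsum_mul_left, ← h1, ← h2,
    ← normD_sq] at h3
  have := ht k
  linarith

theorem normD_not_octahedral (D : ℕ → Set (Icc (0:ℝ) 1))
    (hDopen : ∀ n, IsOpen (D n)) (hDne : ∀ n, (D n).Nonempty)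
    (hbasis : TopologicalSpace.IsTopologicalBasis (Set.range D)) :
    ∃ ε : ℝ, 0 < ε ∧ ∃ (n : ℕ) (x : Fin n → C(Icc (0:ℝ) 1, ℝ)),
      (∀ i, normD D (x i) = 1) ∧
      ¬ ∃ y : C(Icc (0:ℝ) 1, ℝ), normD D y = 1 ∧
          ∀ i, normD D (x i + y) > 2 - ε := by
  obtain ⟨_, ⟨k, rfl⟩, -, hk⟩ := hbasis.exists_subset_of_mem_open
    (a := (0 : Icc (0:ℝ) 1)) (u := {t | (t : ℝ) < 1 / 2}) (by simp)
    (isOpen_lt continuous_subtype_val continuous_const)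
  obtain ⟨_, ⟨m, rfl⟩, hm, -⟩ := hbasis.exists_subset_of_mem_open
    (a := (1 : Icc (0:ℝ) 1)) (u := univ) (by simp) isOpen_univ
  let f : C(Icc (0:ℝ) 1, ℝ) := ⟨fun t => max 0 ((t : ℝ) - 1 / 2), by fun_prop⟩
  have hfk : seminormD D k f = 0 := by
    refine le_antisymm (Real.iSup_le (fun d => ?_) le_rfl) (sD_nonneg D k f)
    have : ((d : Icc (0:ℝ) 1) : ℝ) < 1 / 2 := hk d.2
    have : f d = 0 := max_eq_left (by linarith)
    simp [this]
  have hfm : 0 < seminormD D m f := by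
    have h := le_ciSup (sD_bdd D m f) ⟨1, hm⟩
    have : f 1 = 1 / 2 := by simp [f]; norm_num
    simp only [this] at h
    unfold seminormD
    refine lt_of_lt_of_le ?_ h
    norm_num
  have hf : 0 < normD D f :=
    Real.sqrt_pos.2 ((sD_summable D f).tsum_pos (fun n => by positivity) m (by positivity))
  have h1 : ∀ n, seminormD D n 1 = 1 := by
    intro n
    have := (hDne n).to_subtype
    simp [seminormD]
  have hn1 : normD D 1 = 1 := by
    unfold normD
    simp only [h1]
    have : ∑' n : ℕ, (1 / 2 : ℝ) ^ (n + 1) * 1 ^ 2 = 1 := by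
      simp only [one_pow, mul_one, pow_succ]
      rw [tsum_mul_right, tsum_geometric_two]; norm_num
    rw [this, Real.sqrt_one]
  have hn2 : normD D ((normD D f)⁻¹ • f) = 1 := by
    rw [normD_smul, abs_of_pos (inv_pos.2 hf), inv_mul_cancel₀ hf.ne']
  have hk2 : seminormD D k ((normD D f)⁻¹ • f) = 0 := by rw [sD_smul, hfk, mul_zero]
  set w : ℝ := (1 / 2 : ℝ) ^ (k + 1) with hw
  have hw0 : 0 < w := by positivity
  have hw1 : w ≤ 1 := pow_le_one₀ (by norm_num) (by norm_num)
  refine ⟨w / 16, by positivity, 2, ![1, (normD D f)⁻¹ • f], ?_, ?_⟩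
  · intro i; fin_cases i
    · exact hn1
    · exact hn2
  · rintro ⟨y, hy, h⟩
    have a := h 0
    have b := h 1
    simp only [Matrix.cons_val_zero, Matrix.cons_val_one] at a b
    have ka := normD_key D _ y k hn1 hy
    have kb := normD_key D _ y k hn2 hy
    rw [h1, ← hw] at ka
    rw [hk2, ← hw] at kb
    set s := seminormD D k y
    have a2 := pow_lt_pow_left₀ a (by linarith) two_ne_zero
    have b2 := pow_lt_pow_left₀ b (by linarith) two_ne_zero
    nlinarith [mul_nonneg hw0.le (sq_nonneg (2 * s - 1)), sq_nonneg w]
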